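/- For every integer k ≥ 2, every finite k-uniform forest is obligatory; that is, if F is a finite k-uniform hypergraph whose edge set admits an enumeration E(F) = {e_0, …, e_{n−1}} such that |e_i ∩ (e_0 ∪ … ∪ e_{i−1})| ≤ 1 for every i with 0 < i < n, then every k-uniform hypergraph of chromatic number at least ℵ₁ contains a copy of F. -/

import Mathlib

open Cardinal

universe u

/-- A colouring `f` of the vertices is proper for the edge set `E` if no edge
is monochromatic. -/
def IsProperColoring {V : Type*} {α : Type*} (E : Set (Set V)) (f : V → α) : Prop :=
  ∀ e ∈ E, ∃ x ∈ e, ∃ y ∈ e, f x ≠ f y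

/-- The chromatic number of the hypergraph `(V, E)`. -/
noncomputable def chromaticNumber (V : Type u) (E : Set (Set V)) : Cardinal.{u} :=
  sInf { κ : Cardinal.{u} | ∃ (α : Type u) (f : V → α), #α = κ ∧ IsProperColoring E f }

/-- A finite hypergraph is a *forest* if its edge set admits an enumeration
`e 0, …, e (n-1)` (without repetitions) such that every edge meets the union of the
previous ones in at most one vertex. -/
def IsForest {VF : Type} (EF : Set (Set VF)) : Prop :=
  ∃ (n : ℕ) (e : Fin n → Set VF), Function.Injective e ∧ Set.range e = EF ∧
    ∀ i : Fin n, 0 < (i : ℕ) → (e i ∩ ⋃ j : {j : Fin n // j < i}, e j).ncard ≤ 1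

/-- Greedy colouring along a well-founded relation: if every vertex has only finitely many
neighbours below it, countably many colours suffice. -/
theorem exists_nat_coloring_of_finite_below {V : Type*} {r : V → V → Prop} (hr : WellFounded r)
    (N : V → Set V) (hN : ∀ x, (N x).Finite) (hNr : ∀ x, ∀ y ∈ N x, r y x) :
    ∃ c : V → ℕ, ∀ x, ∀ y ∈ N x, c y ≠ c x := by
  classical
  let step : ∀ x, (∀ y, r y x → ℕ) → ℕ := fun x rec =>
    sInf (Set.range fun y : N x => rec y (hNr x y y.2))ᶜ
  refine ⟨hr.fix step, fun x y hy heq => ?_⟩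
  have hfin : (Set.range fun y : N x => hr.fix step y).Finite := by
    have := (hN x).to_subtype
    exact Set.finite_range _
  have hmem := Nat.sInf_mem hfin.infinite_compl.nonempty
  have hx : hr.fix step x = sInf (Set.range fun y : N x => hr.fix step y)ᶜ := hr.fix_eq step x
  rw [← hx] at hmem
  exact hmem ⟨⟨y, hy⟩, heq⟩

/-- In a digraph with finite out-neighbourhoods, the set reachable from a vertex is countable. -/
theorem countable_reachable {V : Type*} (f : V → Finset V) (v : V) :
    {x | Relation.ReflTransGen (fun a b => b ∈ f a) v x}.Countable := by
  let A : ℕ → Set V := fun n => n.rec {v} fun _ s => ⋃ a ∈ s, (f a : Set V)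
  have hA : ∀ n, (A n).Countable := by
    intro n
    induction n with
    | zero => exact Set.countable_singleton v
    | succ n ih => exact ih.biUnion fun a _ => (f a).countable_toSet
  refine (Set.countable_iUnion hA).mono fun x hx => ?_
  induction hx with
  | refl => exact Set.mem_iUnion.2 ⟨0, rfl⟩
  | tail _ hbc ih =>
    obtain ⟨n, hn⟩ := Set.mem_iUnion.1 ih
    exact Set.mem_iUnion.2 ⟨n + 1, Set.mem_biUnion hn hbc⟩

/-- A digraph with finite out-neighbourhoods is countably chromatic. -/
theorem exists_nat_coloring_of_finite_out {V : Type*} (f : V → Finset V) :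
    ∃ c : V → ℕ, ∀ v, ∀ w ∈ f v, w ≠ v → c w ≠ c v := by
  let cl : V → Set V := fun v => {x | Relation.ReflTransGen (fun a b => b ∈ f a) v x}
  have hinj : ∀ v, ∃ i : V → ℕ, Set.InjOn i (cl v) := fun v =>
    Set.countable_iff_exists_injOn.1 (countable_reachable f v)
  choose i hi using hinj
  have wf : WellFounded (WellOrderingRel (α := V)) := IsWellFounded.wf
  have hne : ∀ x, {v | x ∈ cl v}.Nonempty := fun x => ⟨x, .refl⟩
  let g : V → V := fun x => wf.min {v | x ∈ cl v} (hne x)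
  have hg : ∀ x, x ∈ cl (g x) := fun x => wf.min_mem _ (hne x)
  have hgle : ∀ x, ∀ y ∈ f x, WellOrderingRel (g y) (g x) ∨ g y = g x := by
    intro x y hy
    have h : ¬ WellOrderingRel (g x) (g y) := wf.not_lt_min {v | y ∈ cl v} ((hg x).tail hy)
    rcases trichotomous_of WellOrderingRel (g y) (g x) with h' | h' | h'
    exacts [.inl h', .inr h', (h h').elim]
  let rank : V → V × ℕ := fun x => (g x, i (g x) x)
  let R : V → V → Prop := InvImage (Prod.Lex WellOrderingRel (· < ·)) rank
  have hR : WellFounded R := InvImage.wf _ (wf.prod_lex wellFounded_lt)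
  have htri : ∀ x y, y ∈ f x → y ≠ x → R x y ∨ R y x := by
    intro x y hy hyx
    rcases hgle x y hy with h | h
    · exact .inr (Prod.Lex.left _ _ h)
    · have hne : i (g x) y ≠ i (g x) x := fun h' => hyx (hi (g x) (h ▸ hg y) (hg x) h')
      rcases lt_or_gt_of_ne hne with h' | h'
      · exact .inr (Prod.lex_def.2 (.inr ⟨h, by simpa [rank, h] using h'⟩))
      · exact .inl (Prod.lex_def.2 (.inr ⟨h.symm, by simpa [rank, h] using h'⟩))
  obtain ⟨c, hc⟩ := exists_nat_coloring_of_finite_below hR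
    (fun x => {y | R y x ∧ (y ∈ f x ∨ x ∈ f y)}) (fun x => by
      have hfin : {y | y ∈ cl (g x) ∧ i (g x) y < i (g x) x}.Finite := by
        refine Set.Finite.of_finite_image ((Set.finite_lt_nat (i (g x) x)).subset ?_)
          ((hi (g x)).mono fun y hy => hy.1)
        rintro _ ⟨y, hy, rfl⟩
        exact hy.2
      refine ((f x).finite_toSet.union hfin).subset ?_
      rintro y ⟨hyx, hy | hy⟩
      · exact .inl hy
      · right
        rcases Prod.lex_def.1 hyx with h | ⟨h, h'⟩
        · rcases hgle y x hy with h'' | h''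
          · exact (asymm_of WellOrderingRel h h'').elim
          · exact (irrefl_of WellOrderingRel (g x) (by simpa [rank, h''] using h)).elim
        · have h : g y = g x := h
          exact ⟨h ▸ hg y, by simpa [rank, h] using h'⟩)
    fun x y hy => hy.1
  refine ⟨c, fun v w hw hwv => ?_⟩
  rcases htri v w hw hwv with h | h
  · exact (hc w v ⟨h, .inr hw⟩).symm
  · exact hc v w ⟨h, .inl hw⟩

/-- If every nonempty set `W` of vertices has a vertex `v` such that some finite set avoiding `v`
meets all edges inside `W` through `v`, then such finite sets can be assigned to the vertices
simultaneously, so that every edge meets the set assigned to one of its vertices. -/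
theorem exists_finset_assignment {V : Type*} {E : Set (Set V)} (hne : ∀ e ∈ E, e.Nonempty)
    (h : ∀ W : Set V, W.Nonempty → ∃ v ∈ W, ∃ S : Finset V, v ∉ S ∧
      ∀ e ∈ E, e ⊆ W → v ∈ e → ∃ x ∈ e, x ∈ S) :
    ∃ f : V → Finset V, (∀ v, v ∉ f v) ∧ ∀ e ∈ E, ∃ v ∈ e, ∃ x ∈ e, x ∈ f v := by
  obtain ⟨M, hM⟩ := zorn_subset {R : Set (V × Finset V) | (∀ p ∈ R, p.1 ∉ p.2) ∧
      (∀ p ∈ R, ∀ q ∈ R, p.1 = q.1 → p = q) ∧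
      ∀ p ∈ R, ∀ e ∈ E, p.1 ∈ e → ∃ q ∈ R, q.1 ∈ e ∧ ∃ x ∈ e, x ∈ q.2} (by
    intro c hc hchain
    refine ⟨⋃₀ c, ⟨?_, ?_, ?_⟩, fun s hs => Set.subset_sUnion_of_mem hs⟩
    · rintro p ⟨s, hs, hp⟩
      exact (hc hs).1 p hp
    · rintro p ⟨s, hs, hp⟩ q ⟨t, ht, hq⟩ hpq
      rcases hchain.total hs ht with hst | hst
      · exact (hc ht).2.1 p (hst hp) q hq hpq
      · exact (hc hs).2.1 p hp q (hst hq) hpq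
    · rintro p ⟨s, hs, hp⟩ e he hpe
      obtain ⟨q, hq, hq'⟩ := (hc hs).2.2 p hp e he hpe
      exact ⟨q, ⟨s, hs, hq⟩, hq'⟩)
  obtain ⟨hM1, hM2, hM3⟩ := hM.prop
  have hdom : ∀ v, ∃ S, (v, S) ∈ M := by
    by_contra! hcon
    obtain ⟨v, hv, S, hvS, hS⟩ := h {v | ∀ S, (v, S) ∉ M} hcon
    refine hv S (hM.le_of_ge (y := insert (v, S) M) ⟨?_, ?_, ?_⟩ (Set.subset_insert _ _)
      (Set.mem_insert _ _))
    · rintro p (rfl | hp)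
      exacts [hvS, hM1 p hp]
    · rintro p (rfl | hp) q (rfl | hq) hpq
      · rfl
      · exact (hv q.2 (by rw [show v = q.1 from hpq]; exact hq)).elim
      · exact (hv p.2 (by rw [show v = p.1 from hpq.symm]; exact hp)).elim
      · exact hM2 p hp q hq hpq
    · intro p hp e he hpe
      by_cases hmeet : ∃ q ∈ M, q.1 ∈ e
      · obtain ⟨q, hq, hqe⟩ := hmeet
        obtain ⟨q', hq', h'⟩ := hM3 q hq e he hqe
        exact ⟨q', .inr hq', h'⟩
      · push Not at hmeet
        rcases hp with rfl | hp
        · exact ⟨(v, S), .inl rfl, hpe, hS e he (fun x hx T hT => hmeet _ hT hx) hpe⟩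
        · exact (hmeet p hp hpe).elim
  choose f hf using hdom
  refine ⟨f, fun v => hM1 _ (hf v), fun e he => ?_⟩
  obtain ⟨v, hv⟩ := hne e he
  obtain ⟨⟨w, S⟩, hw, hwe, hx⟩ := hM3 _ (hf v) e he hv
  have hfw : f w = S := congrArg Prod.snd (hM2 _ (hf w) _ hw rfl)
  exact ⟨w, hwe, hfw ▸ hx⟩

/-- An uncountably chromatic hypergraph has no proper colouring with countably many colours. -/
theorem not_isProperColoring_nat {V : Type u} {E : Set (Set V)}
    (hChr : Cardinal.aleph 1 ≤ chromaticNumber V E) (c : V → ℕ) : ¬ IsProperColoring E c := by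
  intro hc
  have hle : chromaticNumber V E ≤ ℵ₀ := by
    refine csInf_le' ⟨ULift ℕ, fun v => ⟨c v⟩, by simp, fun e he => ?_⟩
    obtain ⟨x, hx, y, hy, hxy⟩ := hc e he
    exact ⟨x, hx, y, hy, fun h => hxy (congrArg ULift.down h)⟩
  exact absurd (hChr.trans hle) (not_le.2 Cardinal.aleph0_lt_aleph_one)

/-- An uncountably chromatic hypergraph has a nonempty set `W` of vertices such that every vertex
of `W` lies on edges inside `W` avoiding any prescribed finite set of other vertices. -/
theorem exists_rich_subset {V : Type u} {E : Set (Set V)} (hne : ∀ e ∈ E, e.Nonempty)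
    (hChr : Cardinal.aleph 1 ≤ chromaticNumber V E) :
    ∃ W : Set V, W.Nonempty ∧ ∀ v ∈ W, ∀ S : Finset V, v ∉ S →
      ∃ e ∈ E, e ⊆ W ∧ v ∈ e ∧ ∀ x ∈ e, x ∉ S := by
  by_contra! hcon
  obtain ⟨f, hf, hE⟩ := exists_finset_assignment hne hcon
  obtain ⟨c, hc⟩ := exists_nat_coloring_of_finite_out f
  refine not_isProperColoring_nat hChr c fun e he => ?_
  obtain ⟨v, hv, x, hx, hxv⟩ := hE e he
  exact ⟨x, hx, v, hv, hc v x hxv fun h => hf v (h ▸ hxv)⟩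

theorem infinite_of_uncountable_chromatic {V : Type u} {E : Set (Set V)}
    (hE : ∀ e ∈ E, 2 ≤ e.ncard) (hChr : Cardinal.aleph 1 ≤ chromaticNumber V E) :
    Infinite V := by
  by_contra hfin
  rw [not_infinite_iff_finite] at hfin
  obtain ⟨c, hc⟩ := exists_injective_nat V
  refine not_isProperColoring_nat hChr c fun e he => ?_
  obtain ⟨x, hx, y, hy, hxy⟩ := (Set.one_lt_ncard (Set.toFinite e)).1 (hE e he)
  exact ⟨x, hx, y, hy, hc.ne hxy⟩

/-- A map that is injective on a set extends to an injective map into an infinite type. -/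
theorem exists_injective_eqOn {α β : Type*} [Finite α] [Infinite β] {U : Set α} {φ : α → β}
    (hφ : Set.InjOn φ U) : ∃ ψ : α → β, Function.Injective ψ ∧ Set.EqOn ψ φ U := by
  classical
  have hinf : ((φ '' U)ᶜ).Infinite := (U.toFinite.image φ).infinite_compl
  obtain ⟨a, ha⟩ := exists_injective_nat α
  let g : α → β := fun x => hinf.natEmbedding _ (a x)
  refine ⟨U.piecewise φ g, (Set.injective_piecewise_iff U).2 ⟨hφ, fun x _ y _ hxy => ?_, ?_⟩,
    U.piecewise_eqOn φ g⟩
  · exact ha ((hinf.natEmbedding _).injective (Subtype.ext hxy))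
  · intro x hx y _ hxy
    exact (hinf.natEmbedding _ (a y)).2 ⟨x, hx, hxy⟩

/-- Finite sets of equal size are in bijection, with one value prescribed. -/
theorem exists_bijOn_map_eq {α β : Type*} {A : Set α} {B : Set β} (hA : A.Finite) (hB : B.Finite)
    (hAB : A.ncard = B.ncard) {p : α} (hp : p ∈ A) {u : β} (hu : u ∈ B) :
    ∃ g : α → β, Set.BijOn g A B ∧ g p = u := by
  classical
  have hβ : Nonempty β := ⟨u⟩
  obtain ⟨g, hg⟩ := hA.exists_bijOn_of_encard_eq (t := B)
    (by rw [← hA.cast_ncard_eq, ← hB.cast_ncard_eq, hAB])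
  refine ⟨Equiv.swap (g p) u ∘ g, Set.BijOn.comp ?_ hg, by simp⟩
  have hmaps : Set.MapsTo (Equiv.swap (g p) u) B B := by
    intro x hx
    rw [Equiv.swap_apply_def]
    split_ifs
    exacts [hu, hg.mapsTo hp, hx]
  exact ⟨hmaps, (Equiv.injective _).injOn, fun x hx => ⟨_, hmaps hx, by simp⟩⟩

/-- Embedding the edges of a forest one at a time into a set all of whose vertices lie on edges
avoiding any prescribed finite set of other vertices. -/
theorem exists_partial_embedding {k n : ℕ} (hk : 2 ≤ k) {VF : Type*} [Finite VF]
    {V : Type*} {E : Set (Set V)} (hE : ∀ e ∈ E, e.ncard = k) {W : Set V} (hWne : W.Nonempty)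
    (hW : ∀ v ∈ W, ∀ S : Finset V, v ∉ S → ∃ e ∈ E, e ⊆ W ∧ v ∈ e ∧ ∀ x ∈ e, x ∉ S)
    (e : Fin n → Set VF) (hek : ∀ i, (e i).ncard = k)
    (he : ∀ i : Fin n, 0 < (i : ℕ) → (e i ∩ ⋃ j : {j : Fin n // j < i}, e j).ncard ≤ 1)
    (m : ℕ) (hm : m ≤ n) :
    ∃ φ : VF → V, Set.InjOn φ (⋃ j : {j : Fin n // (j : ℕ) < m}, e j) ∧
      Set.MapsTo φ (⋃ j : {j : Fin n // (j : ℕ) < m}, e j) W ∧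
      ∀ j : Fin n, (j : ℕ) < m → φ '' e j ∈ E := by
  classical
  induction m with
  | zero =>
    obtain ⟨w, hw⟩ := hWne
    refine ⟨fun _ => w, fun x hx => ?_, fun _ _ => hw, fun j hj => (Nat.not_lt_zero _ hj).elim⟩
    obtain ⟨⟨j, hj⟩, -⟩ := Set.mem_iUnion.1 hx
    exact (Nat.not_lt_zero _ hj).elim
  | succ m ih =>
    obtain ⟨φ, hinj, hmaps, hedge⟩ := ih (by omega)
    set U : Set VF := ⋃ j : {j : Fin n // (j : ℕ) < m}, e j with hU
    let i : Fin n := ⟨m, by omega⟩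
    have hone : (e i ∩ U).ncard ≤ 1 := by
      rcases Nat.eq_zero_or_pos m with rfl | hpos
      · have hU0 : U = ∅ := Set.iUnion_eq_empty.2 fun j => (Nat.not_lt_zero _ j.2).elim
        simp [hU0]
      · exact he i hpos
    have hsub : ∀ x ∈ e i ∩ U, ∀ y ∈ e i ∩ U, x = y := fun x hx y hy =>
      (Set.ncard_le_one (Set.toFinite _)).1 hone x hx y hy
    let S : Finset V := (U.toFinite.image φ).toFinset
    have hS : ∀ x, x ∈ S ↔ x ∈ φ '' U := fun x => Set.Finite.mem_toFinset _
    obtain ⟨p, hp, u, hu, hpu⟩ : ∃ p ∈ e i, ∃ u ∈ W, (p ∈ U ∧ φ p = u) ∨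
        ((∀ x ∈ e i, x ∉ U) ∧ u ∉ S) := by
      by_cases hmeet : ∃ p ∈ e i, p ∈ U
      · obtain ⟨p, hp, hpU⟩ := hmeet
        exact ⟨p, hp, φ p, hmaps hpU, .inl ⟨hpU, rfl⟩⟩
      · push Not at hmeet
        obtain ⟨p, hp⟩ : (e i).Nonempty := Set.nonempty_of_ncard_ne_zero (by rw [hek]; omega)
        obtain ⟨w, hw⟩ := hWne
        obtain ⟨d, hd, hdW, hwd, hdS⟩ := hW w hw (S.erase w) (by simp)
        obtain ⟨u, hu, huw⟩ := Set.exists_ne_of_one_lt_ncard (s := d)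
          (by rw [hE d hd]; omega) w
        exact ⟨p, hp, u, hdW hu, .inr ⟨hmeet, fun h => hdS u hu (by simp [huw, h])⟩⟩
    obtain ⟨d, hd, hdW, hud, hdS⟩ := hW u hu (S.erase u) (by simp)
    have hdfin : d.Finite := Set.finite_of_ncard_ne_zero (by rw [hE d hd]; omega)
    obtain ⟨g, hg, hgp⟩ := exists_bijOn_map_eq (Set.toFinite (e i)) hdfin
      ((hek i).trans (hE d hd).symm) hp hud
    have hUsucc : (⋃ j : {j : Fin n // (j : ℕ) < m + 1}, e j) = U ∪ e i := by
      ext x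
      simp only [hU, Set.mem_iUnion, Set.mem_union, Subtype.exists, exists_prop]
      constructor
      · rintro ⟨j, hj, hx⟩
        rcases Nat.lt_succ_iff_lt_or_eq.1 hj with h | h
        · exact .inl ⟨j, h, hx⟩
        · exact .inr ((Fin.ext h : j = i) ▸ hx)
      · rintro (⟨j, hj, hx⟩ | hx)
        · exact ⟨j, by omega, hx⟩
        · exact ⟨i, Nat.lt_succ_self m, hx⟩
    have hpU : Set.EqOn (U.piecewise φ g) φ U := U.piecewise_eqOn φ g
    have hpe : Set.EqOn (U.piecewise φ g) g (e i) := by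
      intro x hx
      by_cases hxU : x ∈ U
      · rw [hpU hxU]
        rcases hpu with ⟨hpU', hφp⟩ | ⟨hno, -⟩
        · rw [hsub x ⟨hx, hxU⟩ p ⟨hp, hpU'⟩, hφp, hgp]
        · exact (hno x hx hxU).elim
      · exact Set.piecewise_eq_of_notMem _ _ _ hxU
    have hcross : ∀ x ∈ U, ∀ y ∈ e i, φ x = g y → x = y := by
      intro x hx y hy hxy
      have hgy : g y ∈ S := (hS _).2 ⟨x, hx, hxy⟩
      have hgu : g y = u := by
        by_contra hne
        exact hdS (g y) (hg.mapsTo hy) (Finset.mem_erase.2 ⟨hne, hgy⟩)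
      have hyp : y = p := hg.injOn hy hp (hgu.trans hgp.symm)
      rcases hpu with ⟨hpU', hφp⟩ | ⟨-, hno⟩
      · rw [hyp]
        exact hinj hx hpU' (by rw [hxy, hgu, hφp])
      · exact (hno (hgu ▸ hgy)).elim
    refine ⟨U.piecewise φ g, ?_, ?_, ?_⟩
    · rw [hUsucc]
      rintro x (hx | hx) y (hy | hy) hxy
      · rw [hpU hx, hpU hy] at hxy
        exact hinj hx hy hxy
      · rw [hpU hx, hpe hy] at hxy
        exact hcross x hx y hy hxy
      · rw [hpe hx, hpU hy] at hxy
        exact (hcross y hy x hx hxy.symm).symm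
      · rw [hpe hx, hpe hy] at hxy
        exact hg.injOn hx hy hxy
    · rw [hUsucc]
      rintro x (hx | hx)
      · rw [hpU hx]
        exact hmaps hx
      · rw [hpe hx]
        exact hdW (hg.mapsTo hx)
    · intro j hj
      rcases Nat.lt_succ_iff_lt_or_eq.1 hj with h | h
      · rw [(hpU.mono (Set.subset_iUnion_of_subset ⟨j, h⟩ subset_rfl)).image_eq]
        exact hedge j h
      · rw [(Fin.ext h : j = i), hpe.image_eq, hg.image_eq]
        exact hd

/-- Every finite `k`-uniform forest is obligatory: every `k`-uniform hypergraph of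
chromatic number at least `ℵ₁` contains a copy of it. -/
theorem forest_obligatory (k : ℕ) (hk : 2 ≤ k)
    {VF : Type} [Finite VF] (EF : Set (Set VF)) (hUnif : ∀ e ∈ EF, e.ncard = k)
    (hforest : IsForest EF)
    (V : Type u) (E : Set (Set V)) (hE : ∀ e ∈ E, e.ncard = k)
    (hChr : Cardinal.aleph 1 ≤ chromaticNumber V E) :
    ∃ φ : VF → V, Function.Injective φ ∧ ∀ e ∈ EF, φ '' e ∈ E := by
  obtain ⟨n, e, -, rfl, he⟩ := hforest
  have hE2 : ∀ d ∈ E, 2 ≤ d.ncard := fun d hd => (hE d hd).symm ▸ hk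
  have := infinite_of_uncountable_chromatic hE2 hChr
  obtain ⟨W, hWne, hW⟩ := exists_rich_subset
    (fun d hd => Set.nonempty_of_ncard_ne_zero (by have := hE2 d hd; omega)) hChr
  obtain ⟨φ, hinj, -, hedge⟩ := exists_partial_embedding hk hE hWne hW e
    (fun i => hUnif _ ⟨i, rfl⟩) he n le_rfl
  obtain ⟨ψ, hψ, heq⟩ := exists_injective_eqOn hinj
  refine ⟨ψ, hψ, ?_⟩
  rintro _ ⟨i, rfl⟩
  rw [(heq.mono (Set.subset_iUnion_of_subset ⟨i, i.2⟩ subset_rfl)).image_eq]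
  exact hedge i i.2
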